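/- Let z₁ < ⋯ < z_K (K ≥ 2) be a grid with Cramér projection Π_C, and let ν be any probability measure on ℝ with CDF F_ν. Then the CDF F_{Π_C ν} of Π_C ν satisfies F_{Π_C ν}(z_i) = (1/(z_{i+1}−z_i)) ∫_{z_i}^{z_{i+1}} F_ν(w) dw for each i = 1,…,K−1, and F_{Π_C ν}(z_K) = 1. -/

import Mathlib

open MeasureTheory Filter Set

noncomputable section

/-- The cumulative distribution function of a measure on ℝ. -/
def cdfFn (ν : Measure ℝ) (y : ℝ) : ℝ := (ν (Set.Iic y)).toReal

/-- The Cramér distance `ℓ₂` between two measures on ℝ. -/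
def cramerDist (ν₁ ν₂ : Measure ℝ) : ℝ :=
  Real.sqrt (∫ x, (cdfFn ν₁ x - cdfFn ν₂ x) ^ 2)

/-- The hat functions associated with the grid `z 0 < z 1 < ⋯ < z (K-1)`. -/
def hatFn (K : ℕ) (z : ℕ → ℝ) (i : ℕ) (x : ℝ) : ℝ :=
  if i = 0 ∧ x ≤ z 0 then 1
  else if i = K - 1 ∧ z (K - 1) ≤ x then 1
  else if i + 1 < K ∧ z i ≤ x ∧ x ≤ z (i + 1) then (z (i + 1) - x) / (z (i + 1) - z i)
  else if 0 < i ∧ z (i - 1) ≤ x ∧ x ≤ z i then (x - z (i - 1)) / (z i - z (i - 1))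
  else 0

/-- The Cramér projection onto the grid `z 0 < z 1 < ⋯ < z (K-1)`. -/
def cramerProj (K : ℕ) (z : ℕ → ℝ) (ν : Measure ℝ) : Measure ℝ :=
  ∑ i ∈ Finset.range K, (ENNReal.ofReal (∫ w, hatFn K z i w ∂ν)) • Measure.dirac (z i)

/-- The distributional Bellman operator. -/
def bellmanOp {X A : Type} [Fintype X] [Fintype A] [MeasurableSpace X] [MeasurableSpace A]
    (γ : ℝ) (p : X × A → Measure (ℝ × X)) (pol : X → Measure A)
    (η : X × A → Measure ℝ) (xa : X × A) : Measure ℝ :=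
  (p xa).bind (fun rx' => ∑ a' : A, (pol rx'.2 {a'}) • (η (rx'.2, a')).map (fun t => rx'.1 + γ * t))

/-- The supremum-Cramér metric between return distribution functions. -/
def supCramer {X A : Type} [Fintype X] [Fintype A] (η μ : X × A → Measure ℝ) : ℝ :=
  ⨆ xa : X × A, cramerDist (η xa) (μ xa)

/-- Square-integrable tails of the CDF. -/
def sqIntTails (ν : Measure ℝ) : Prop :=
  IntegrableOn (fun x => (cdfFn ν x) ^ 2) (Set.Iic 0) ∧
  IntegrableOn (fun x => (1 - cdfFn ν x) ^ 2) (Set.Ici 0)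

/-- The descending ramp from 1 at `a` to 0 at `b`. -/
def rampFn (a b x : ℝ) : ℝ := if x ≤ a then 1 else if x ≤ b then (b - x) / (b - a) else 0

/-- Partial sums of hat functions. -/
def partFn (K : ℕ) (z : ℕ → ℝ) (i : ℕ) (x : ℝ) : ℝ :=
  if i + 1 < K then rampFn (z i) (z (i + 1)) x else 1

lemma z_lt (K : ℕ) (z : ℕ → ℝ) (hz : ∀ i, i + 1 < K → z i < z (i + 1)) (i j : ℕ)
    (hij : i < j) (hj : j < K) : z i < z j := by
  induction j with
  | zero => omega
  | succ n ih =>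
    rcases Nat.lt_succ_iff_lt_or_eq.mp hij with h | h
    · exact (ih h (by omega)).trans (hz n hj)
    · subst h; exact hz _ hj

lemma hat_zero (K : ℕ) (hK : 2 ≤ K) (z : ℕ → ℝ) (x : ℝ) :
    hatFn K z 0 x = partFn K z 0 x := by
  have h1 : ¬ (0 = K - 1) := by omega
  have h2 : 0 + 1 < K := by omega
  unfold hatFn partFn rampFn
  simp only [h1, h2, if_true, true_and, false_and, if_false, lt_irrefl]
  by_cases h : x ≤ z 0
  · simp [h]
  · simp [h, (not_le.mp h).le]

lemma hat_succ (K : ℕ) (z : ℕ → ℝ) (hz : ∀ i, i + 1 < K → z i < z (i + 1)) (i : ℕ)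
    (hi : i + 1 < K) (x : ℝ) :
    hatFn K z (i + 1) x = partFn K z (i + 1) x - partFn K z i x := by
  have h0 := hz i hi
  have d0 : z (i + 1) - z i ≠ 0 := by linarith
  unfold hatFn partFn rampFn
  by_cases hl : i + 1 + 1 < K
  · have h1 := hz _ hl
    have d1 : z (i + 1 + 1) - z (i + 1) ≠ 0 := by linarith
    have e : ¬ (i + 1 = K - 1) := by omega
    simp only [e, hl, hi, if_true, true_and, false_and, if_false, Nat.succ_ne_zero, Nat.succ_pos,
      Nat.add_sub_cancel, Nat.add_eq_zero_iff, one_ne_zero, and_false]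
    split_ifs <;> first | (exfalso; grind) | grind
  · have e : K - 1 = i + 1 := by omega
    simp only [e, hl, hi, if_true, true_and, false_and, if_false, Nat.succ_ne_zero, Nat.succ_pos,
      Nat.add_sub_cancel, Nat.add_eq_zero_iff, one_ne_zero, and_false]
    split_ifs <;> first | (exfalso; grind) | grind

lemma sum_hat (K : ℕ) (hK : 2 ≤ K) (z : ℕ → ℝ) (hz : ∀ i, i + 1 < K → z i < z (i + 1)) (i : ℕ)
    (hi : i < K) (x : ℝ) :
    ∑ j ∈ Finset.range (i + 1), hatFn K z j x = partFn K z i x := by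
  induction i with
  | zero => simp [hat_zero K hK]
  | succ n ih =>
    rw [Finset.sum_range_succ, ih (by omega), hat_succ K z hz n hi]; ring

lemma hat_nonneg (K : ℕ) (z : ℕ → ℝ) (hz : ∀ i, i + 1 < K → z i < z (i + 1)) (i : ℕ)
    (hi : i < K) (x : ℝ) : 0 ≤ hatFn K z i x := by
  unfold hatFn
  split_ifs with h1 h2 h3 h4
  · exact zero_le_one
  · exact zero_le_one
  · exact div_nonneg (by linarith [h3.2.2]) (by linarith [h3.2.1, h3.2.2])
  · exact div_nonneg (by linarith [h4.2.1]) (by linarith [h4.2.1, h4.2.2])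
  · exact le_rfl

lemma ramp_integrable (a b : ℝ) (hab : a < b) (ν : Measure ℝ) [IsProbabilityMeasure ν] :
    Integrable (rampFn a b) ν := by
  have hm : Measurable (rampFn a b) := by
    unfold rampFn
    exact Measurable.ite measurableSet_Iic measurable_const
      (Measurable.ite measurableSet_Iic (by fun_prop) measurable_const)
  refine Integrable.of_bound hm.aestronglyMeasurable 1 (ae_of_all _ fun x => ?_)
  have hd : 0 < b - a := by linarith
  unfold rampFn
  split_ifs with h1 h2
  · simp
  · rw [Real.norm_eq_abs, abs_of_nonneg (div_nonneg (by linarith) hd.le), div_le_one hd]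
    linarith
  · simp

lemma part_integrable (K : ℕ) (z : ℕ → ℝ) (hz : ∀ i, i + 1 < K → z i < z (i + 1)) (i : ℕ)
    (ν : Measure ℝ) [IsProbabilityMeasure ν] : Integrable (partFn K z i) ν := by
  unfold partFn
  by_cases h : i + 1 < K
  · simpa only [h, if_true] using ramp_integrable _ _ (hz i h) ν
  · simp only [h, if_false]; exact integrable_const _

lemma hat_integrable (K : ℕ) (hK : 2 ≤ K) (z : ℕ → ℝ) (hz : ∀ i, i + 1 < K → z i < z (i + 1))
    (i : ℕ) (hi : i < K) (ν : Measure ℝ) [IsProbabilityMeasure ν] :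
    Integrable (hatFn K z i) ν := by
  cases i with
  | zero => rw [funext (hat_zero K hK z)]; exact part_integrable K z hz 0 ν
  | succ n =>
    rw [funext (hat_succ K z hz n hi)]
    exact (part_integrable K z hz _ ν).sub (part_integrable K z hz _ ν)

lemma cdf_proj (K : ℕ) (hK : 2 ≤ K) (z : ℕ → ℝ) (hz : ∀ i, i + 1 < K → z i < z (i + 1))
    (ν : Measure ℝ) [IsProbabilityMeasure ν] (i : ℕ) (hi : i < K) :
    cdfFn (cramerProj K z ν) (z i) = ∫ x, partFn K z i x ∂ν := by
  have h1 : cramerProj K z ν (Iic (z i))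
      = ∑ j ∈ Finset.range (i + 1), ENNReal.ofReal (∫ w, hatFn K z j w ∂ν) := by
    unfold cramerProj
    rw [Measure.finsetSum_apply]
    symm
    apply Finset.sum_subset_zero_on_sdiff
    · intro j hj; simp at hj ⊢; omega
    · intro j hj
      simp only [Finset.mem_sdiff, Finset.mem_range, not_lt] at hj
      have := z_lt K z hz i j (by omega) hj.1
      simp [Measure.dirac_apply' _ measurableSet_Iic, this]
    · intro j hj
      simp only [Finset.mem_range] at hj
      have : z j ≤ z i := by
        rcases Nat.lt_succ_iff_lt_or_eq.mp hj with h | h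
        · exact (z_lt K z hz j i h hi).le
        · rw [h]
      simp [Measure.dirac_apply' _ measurableSet_Iic, this]
  have hn : ∀ j ∈ Finset.range (i + 1), 0 ≤ ∫ w, hatFn K z j w ∂ν := fun j hj =>
    integral_nonneg fun x => hat_nonneg K z hz j (by simp at hj; omega) x
  unfold cdfFn
  rw [h1, ← ENNReal.ofReal_sum_of_nonneg hn, ENNReal.toReal_ofReal (Finset.sum_nonneg hn),
    ← integral_finsetSum _ (fun j hj => hat_integrable K hK z hz j (by simp at hj; omega) ν)]
  exact integral_congr_ae (ae_of_all _ fun x => sum_hat K hK z hz i hi x)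

lemma ramp_eq (a b : ℝ) (hab : a < b) (x : ℝ) :
    ∫ w in Ioc a b, ({p : ℝ × ℝ | p.1 ≤ p.2}.indicator (fun _ => (1 : ℝ)) (x, w))
      = (b - a) * rampFn a b x := by
  have e : (fun w : ℝ => {p : ℝ × ℝ | p.1 ≤ p.2}.indicator (fun _ => (1 : ℝ)) (x, w))
      = (Ici x).indicator (fun _ => (1 : ℝ)) := by
    ext w; simp [indicator]
  rw [e, integral_indicator measurableSet_Ici, Measure.restrict_restrict measurableSet_Ici]
  have hd : b - a ≠ 0 := by linarith
  unfold rampFn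
  split_ifs with h1 h2
  · have : Ici x ∩ Ioc a b = Ioc a b := by
      ext w; simp only [mem_inter_iff, mem_Ici, mem_Ioc]; grind
    rw [this]; simp [hab.le]
  · have : Ici x ∩ Ioc a b = Icc x b := by
      ext w; simp only [mem_inter_iff, mem_Ici, mem_Ioc, mem_Icc]; grind
    rw [this]; simp [h2]; field_simp
  · have : Ici x ∩ Ioc a b = ∅ := by
      ext w; simp only [mem_inter_iff, mem_Ici, mem_Ioc, mem_empty_iff_false]; grind
    rw [this]; simp

lemma ramp_integral (a b : ℝ) (hab : a < b) (ν : Measure ℝ) [IsProbabilityMeasure ν] :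
    ∫ x, rampFn a b x ∂ν = (1 / (b - a)) * ∫ w in a..b, cdfFn ν w := by
  have hd : b - a ≠ 0 := by linarith
  have hS : MeasurableSet {p : ℝ × ℝ | p.1 ≤ p.2} := measurableSet_le measurable_fst measurable_snd
  have hsw := integral_integral_swap (μ := ν) (ν := volume.restrict (Ioc a b))
    (f := fun x w => {p : ℝ × ℝ | p.1 ≤ p.2}.indicator (fun _ => (1 : ℝ)) (x, w))
    ((integrable_const (1 : ℝ)).indicator hS)
  simp only [ramp_eq a b hab] at hsw
  rw [integral_const_mul] at hsw
  rw [intervalIntegral.integral_of_le hab.le]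
  have e : ∀ w, ∫ x, ({p : ℝ × ℝ | p.1 ≤ p.2}.indicator (fun _ => (1 : ℝ)) (x, w)) ∂ν
      = cdfFn ν w := by
    intro w
    have : (fun x : ℝ => {p : ℝ × ℝ | p.1 ≤ p.2}.indicator (fun _ => (1 : ℝ)) (x, w))
      = (Iic w).indicator (fun _ => (1 : ℝ)) := by
      ext x; simp [indicator]
    rw [this, integral_indicator measurableSet_Iic]
    simp [cdfFn, Measure.real]
  simp only [e] at hsw
  rw [← hsw]; field_simp

/-- The CDF of the Cramér projection of ν at z_i equals the average of the
CDF of ν over [z_i, z_{i+1}], and equals 1 at z_K. -/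
theorem cramerProj_cdf_characterisation
    (K : ℕ) (hK : 2 ≤ K) (z : ℕ → ℝ) (hz : ∀ i, i + 1 < K → z i < z (i + 1))
    (ν : Measure ℝ) [IsProbabilityMeasure ν] :
    (∀ i, i + 1 < K →
      cdfFn (cramerProj K z ν) (z i)
        = (1 / (z (i + 1) - z i)) * ∫ w in (z i)..(z (i + 1)), cdfFn ν w) ∧
    cdfFn (cramerProj K z ν) (z (K - 1)) = 1 := by
  refine ⟨fun i hi => ?_, ?_⟩
  · rw [cdf_proj K hK z hz ν i (by omega), ← ramp_integral _ _ (hz i hi) ν]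
    simp only [partFn, hi, if_true]
  · rw [cdf_proj K hK z hz ν (K - 1) (by omega)]
    have h : ¬ (K - 1 + 1 < K) := by omega
    simp [partFn, h]

end
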